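/- Every trading network market in which every agent's valuation is fully substitutable admits at least one competitive equilibrium: there exist p ∈ ℝ^Ω and Φ ⊆ Ω such that Φ ∩ Ω_i ∈ D^i(p) for every agent i. -/

import Mathlib

/-!
A trade `ω` is regarded as an indivisible item which starts with its seller: agent `i` *holds* `ω`
when `i` buys it, or when `i` is its seller and does not sell it. In these terms full
substitutability is the gross substitutes condition: when prices rise, an agent can keep holding
every held item whose price did not change (`exists_demand_of_le`). Clause (ii) gives this for the
prices of sold trades; for bought trades clause (i) speaks about falling prices, and is reversed by
perturbing the prices so that the given bundle becomes the unique optimum.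

On a price grid of step `ε` in `[-P, P]`, an ascending auction in the style of Kelso and Crawford is
run (`auction`): each item has a tentative holder facing price `p ω`, while everybody else faces
`p ω + ε` (capped at `P`). An agent demanding an item tentatively held by somebody else takes it
over and its price goes up by `ε`; gross substitutes keeps the demands of the other agents
compatible with what they still hold. At the end, an item is demanded by both of its parties only
if its price is `P`, and by neither only if its price is `-P`. As every agent does at least as well
as by not trading, the total value is at least `P` times the number of such items, up to an error
of order `ε`, so for `P` large there are none: the demanded bundles fit together to a set `Φ` of
trades (`exists_approx_equilibrium`). Since the prices stay in a fixed cube and there are finitely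
many `Φ`, letting `ε → 0` along a subsequence yields a competitive equilibrium.
-/

open Finset

variable {I Ω : Type*} [Fintype I] [DecidableEq I] [Fintype Ω] [DecidableEq Ω]

/-- The trades involving agent `i`. -/
def tradesOf (b s : Ω → I) (i : I) : Finset Ω :=
  Finset.univ.filter fun ω => b ω = i ∨ s ω = i

/-- `χ^i_ω`: `1` if `i` buys `ω`, `-1` if `i` sells `ω`, `0` otherwise. -/
def chi (b s : Ω → I) (i : I) (ω : Ω) : ℝ :=
  if b ω = i then 1 else if s ω = i then -1 else 0

/-- Quasi-linear utility of agent `i` for bundle `Ψ` at prices `p`. -/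
noncomputable def utility (b s : Ω → I) (v : I → Finset Ω → EReal) (i : I)
    (Ψ : Finset Ω) (p : Ω → ℝ) : EReal :=
  v i Ψ - ((∑ ω ∈ Ψ, chi b s i ω * p ω : ℝ) : EReal)

/-- Demand of agent `i` at prices `p`: utility-maximizing bundles `Ψ ⊆ Ω_i`. -/
noncomputable def demand (b s : Ω → I) (v : I → Finset Ω → EReal) (i : I)
    (p : Ω → ℝ) : Set (Finset Ω) :=
  {Ψ | Ψ ⊆ tradesOf b s i ∧
    ∀ Ψ' ⊆ tradesOf b s i, utility b s v i Ψ' p ≤ utility b s v i Ψ p}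

/-- A market arrangement `(p, Φ)` is a competitive equilibrium. -/
noncomputable def IsCompetitiveEquilibrium (b s : Ω → I) (v : I → Finset Ω → EReal)
    (p : Ω → ℝ) (Φ : Finset Ω) : Prop :=
  ∀ i : I, Φ ∩ tradesOf b s i ∈ demand b s v i p

/-- Full substitutability of agent `i`'s valuation. -/
noncomputable def FullySubstitutable (b s : Ω → I) (v : I → Finset Ω → EReal) (i : I) : Prop :=
  (∀ p p' : Ω → ℝ, (∀ ω, s ω = i → p ω = p' ω) → (∀ ω, b ω = i → p' ω ≤ p ω) →
    ∀ Ψ ∈ demand b s v i p, ∃ Ψ' ∈ demand b s v i p',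
      (∀ ω ∈ Ψ', b ω = i → p ω = p' ω → ω ∈ Ψ) ∧ (∀ ω ∈ Ψ, s ω = i → ω ∈ Ψ')) ∧
  (∀ p p' : Ω → ℝ, (∀ ω, b ω = i → p ω = p' ω) → (∀ ω, s ω = i → p ω ≤ p' ω) →
    ∀ Ψ ∈ demand b s v i p, ∃ Ψ' ∈ demand b s v i p',
      (∀ ω ∈ Ψ', s ω = i → p ω = p' ω → ω ∈ Ψ) ∧ (∀ ω ∈ Ψ, b ω = i → ω ∈ Ψ'))

/-- The set of trades that are active under offer profile `σ`. -/
noncomputable def activeTrades (b s : Ω → I) (σ : I → Ω → ℝ) : Finset Ω :=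
  Finset.univ.filter fun ω => σ (b ω) ω = σ (s ω) ω

/-- Payoff of agent `i` in the trading network game under offers `σ`. -/
noncomputable def payoff (b s : Ω → I) (v : I → Finset Ω → EReal)
    (σ : I → Ω → ℝ) (i : I) : EReal :=
  utility b s v i (activeTrades b s σ ∩ tradesOf b s i) (fun ω => σ (b ω) ω)

/-- Nash equilibrium of the trading network game. -/
noncomputable def IsNashEquilibrium (b s : Ω → I) (v : I → Finset Ω → EReal)
    (σ : I → Ω → ℝ) : Prop :=
  ∀ (i : I) (τ : Ω → ℝ), payoff b s v (Function.update σ i τ) i ≤ payoff b s v σ i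

/-- `ε`-tightness of an offer profile. -/
def IsTight (b s : Ω → I) (σ : I → Ω → ℝ) (ε : ℝ) : Prop :=
  ∀ ω : Ω, |σ (b ω) ω - σ (s ω) ω| ≤ ε

/-- The maximum vertex degree `Δ` of the market. -/
def maxDegree (b s : Ω → I) : ℕ :=
  Finset.univ.sup fun i => (tradesOf b s i).card

/-- Trades whose buyer and seller both lie in coalition `C`. -/
def coalitionTrades (b s : Ω → I) (C : Finset I) : Finset Ω :=
  Finset.univ.filter fun ω => b ω ∈ C ∧ s ω ∈ C

/-- The characteristic function `w(C)` of the cooperative market game. -/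
noncomputable def coalitionValue (b s : Ω → I) (v : I → Finset Ω → EReal)
    (C : Finset I) : EReal :=
  (coalitionTrades b s C).powerset.sup' (Finset.powerset_nonempty _)
    fun Φ => ∑ i ∈ C, v i (Φ ∩ tradesOf b s i)

/-- A set of trades is efficient if it attains the market value. -/
noncomputable def IsEfficient (b s : Ω → I) (v : I → Finset Ω → EReal)
    (Φ : Finset Ω) : Prop :=
  (∑ i, v i (Φ ∩ tradesOf b s i)) = coalitionValue b s v Finset.univ

/-- A core imputation of the cooperative market game. -/
noncomputable def IsCoreImputation (b s : Ω → I) (v : I → Finset Ω → EReal)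
    (x : I → ℝ) : Prop :=
  (∀ i, 0 ≤ x i) ∧ (((∑ i, x i : ℝ) : EReal) = coalitionValue b s v Finset.univ) ∧
  ∀ C : Finset I, coalitionValue b s v C ≤ ((∑ i ∈ C, x i : ℝ) : EReal)

/-- Agent `i` is essential if it is involved in every efficient set of trades. -/
noncomputable def IsEssential (b s : Ω → I) (v : I → Finset Ω → EReal) (i : I) : Prop :=
  ∀ Φ : Finset Ω, IsEfficient b s v Φ → (Φ ∩ tradesOf b s i).Nonempty

/-- Agents involved in at least one trade of `Ψ`. -/
noncomputable def involvedAgents (b s : Ω → I) (Ψ : Finset Ω) : Finset I :=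
  Finset.univ.filter fun i => (Ψ ∩ tradesOf b s i).Nonempty

/-- `(q, Ψ)` blocks the market outcome `(p, Φ)`. -/
noncomputable def Blocks (b s : Ω → I) (v : I → Finset Ω → EReal) (p : Ω → ℝ)
    (Φ : Finset Ω) (q : Ω → ℝ) (Ψ : Finset Ω) : Prop :=
  (∀ i ∈ involvedAgents b s Ψ,
    utility b s v i (Φ ∩ tradesOf b s i) p ≤ utility b s v i (Ψ ∩ tradesOf b s i) q) ∧
  (∃ i ∈ involvedAgents b s Ψ,
    utility b s v i (Φ ∩ tradesOf b s i) p < utility b s v i (Ψ ∩ tradesOf b s i) q)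

/-- A market outcome is in the core if no coalition can block it. -/
noncomputable def IsCoreOutcome (b s : Ω → I) (v : I → Finset Ω → EReal)
    (p : Ω → ℝ) (Φ : Finset Ω) : Prop :=
  ¬ ∃ (q : Ω → ℝ) (Ψ : Finset Ω), Blocks b s v p Φ q Ψ

set_option linter.unusedSectionVars false

/-- Utility as a real number; equal to `utility` on bundles of value `≠ -∞`. -/
noncomputable def realUtility (b s : Ω → I) (v : I → Finset Ω → EReal) (i : I)
    (Ψ : Finset Ω) (p : Ω → ℝ) : ℝ :=
  (v i Ψ).toReal - ∑ ω ∈ Ψ, chi b s i ω * p ω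

/-- Under bundle `Ψ`, agent `i` ends up holding item `ω`: either `i` buys `ω`, or `i` is the seller
of `ω` and does not sell it. -/
def Holds (b s : Ω → I) (i : I) (Ψ : Finset Ω) (ω : Ω) : Prop :=
  (b ω = i ∧ ω ∈ Ψ) ∨ (s ω = i ∧ ω ∉ Ψ)

/-! ### Demand in terms of real-valued utility -/

lemma utility_eq (b s : Ω → I) (v : I → Finset Ω → EReal) (hvtop : ∀ i Ψ, v i Ψ ≠ ⊤)
    (i : I) (Ψ : Finset Ω) (p : Ω → ℝ) (h : v i Ψ ≠ ⊥) :
    utility b s v i Ψ p = (realUtility b s v i Ψ p : EReal) := by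
  unfold utility realUtility
  rw [EReal.coe_sub, EReal.coe_toReal (hvtop i Ψ) h]

lemma utility_eq_bot (b s : Ω → I) (v : I → Finset Ω → EReal)
    (i : I) (Ψ : Finset Ω) (p : Ω → ℝ) (h : v i Ψ = ⊥) :
    utility b s v i Ψ p = ⊥ := by
  unfold utility
  rw [h, EReal.bot_sub]

lemma mem_demand_iff (b s : Ω → I) (v : I → Finset Ω → EReal)
    (hv0 : ∀ i, v i ∅ = 0) (hvtop : ∀ i Ψ, v i Ψ ≠ ⊤) (i : I) (Ψ : Finset Ω) (p : Ω → ℝ) :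
    Ψ ∈ demand b s v i p ↔ Ψ ⊆ tradesOf b s i ∧ v i Ψ ≠ ⊥ ∧
      ∀ X ⊆ tradesOf b s i, v i X ≠ ⊥ →
        realUtility b s v i X p ≤ realUtility b s v i Ψ p := by
  have h0 : v i ∅ ≠ ⊥ := by simp [hv0]
  constructor
  · rintro ⟨h1, h2⟩
    have hΨ : v i Ψ ≠ ⊥ := by
      intro h
      have := h2 ∅ (empty_subset _)
      rw [utility_eq_bot b s v i Ψ p h, utility_eq b s v hvtop i ∅ p h0] at this
      exact EReal.coe_ne_bot _ (le_bot_iff.1 this)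
    refine ⟨h1, hΨ, fun X hX hXb => ?_⟩
    have := h2 X hX
    rw [utility_eq b s v hvtop i X p hXb, utility_eq b s v hvtop i Ψ p hΨ] at this
    exact_mod_cast this
  · rintro ⟨h1, hΨ, h2⟩
    refine ⟨h1, fun X hX => ?_⟩
    by_cases hXb : v i X = ⊥
    · rw [utility_eq_bot b s v i X p hXb]
      exact bot_le
    · rw [utility_eq b s v hvtop i X p hXb, utility_eq b s v hvtop i Ψ p hΨ]
      exact_mod_cast h2 X hX hXb

lemma demand_nonempty (b s : Ω → I) (v : I → Finset Ω → EReal) (i : I) (p : Ω → ℝ) :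
    ∃ Ψ, Ψ ∈ demand b s v i p := by
  obtain ⟨Ψ, h1, h2⟩ := Finset.exists_max_image (tradesOf b s i).powerset
    (fun X => utility b s v i X p) ⟨∅, by simp⟩
  exact ⟨Ψ, mem_powerset.1 h1, fun X hX => h2 X (mem_powerset.2 hX)⟩

lemma realUtility_eq_univ (b s : Ω → I) (v : I → Finset Ω → EReal) (i : I)
    (Ψ : Finset Ω) (p : Ω → ℝ) :
    realUtility b s v i Ψ p = (v i Ψ).toReal - ∑ ω, if ω ∈ Ψ then chi b s i ω * p ω else 0 := by
  unfold realUtility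
  simp

lemma abs_chi_le (b s : Ω → I) (i : I) (ω : Ω) : |chi b s i ω| ≤ 1 := by
  unfold chi
  split_ifs <;> simp

lemma realUtility_sub_le (b s : Ω → I) (v : I → Finset Ω → EReal) (i : I)
    (Ψ : Finset Ω) (p q : Ω → ℝ) (ε : ℝ) (h : ∀ ω, |p ω - q ω| ≤ ε) :
    |realUtility b s v i Ψ p - realUtility b s v i Ψ q| ≤ Fintype.card Ω * ε := by
  rw [realUtility_eq_univ, realUtility_eq_univ, sub_sub_sub_cancel_left,
    ← Finset.sum_sub_distrib]
  calc _ ≤ ∑ _ω : Ω, ε := by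
        refine (Finset.abs_sum_le_sum_abs _ _).trans (Finset.sum_le_sum fun ω _ => ?_)
        have hε := (abs_nonneg _).trans (h ω)
        split_ifs
        · rw [← mul_sub, abs_mul, abs_sub_comm]
          nlinarith [abs_chi_le b s i ω, h ω, abs_nonneg (p ω - q ω), abs_nonneg (chi b s i ω)]
        · simpa using hε
    _ = _ := by simp

lemma continuous_realUtility (b s : Ω → I) (v : I → Finset Ω → EReal) (i : I) (Ψ : Finset Ω) :
    Continuous fun p : Ω → ℝ => realUtility b s v i Ψ p := by
  unfold realUtility
  fun_prop

/-! ### Full substitutability as gross substitutes -/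

open Classical in
/-- Prices `p` perturbed by `ε` in favour of the items that `i` holds under `Ψ`. -/
noncomputable def favour (b s : Ω → I) (i : I) (Ψ : Finset Ω) (p : Ω → ℝ) (ε : ℝ) : Ω → ℝ :=
  fun ω => p ω + ε * (if Holds b s i Ψ ω then -1 else 1)

lemma eq_of_mem_demand_favour (b s : Ω → I) (v : I → Finset Ω → EReal)
    (hbs : ∀ ω, b ω ≠ s ω) (hv0 : ∀ i, v i ∅ = 0) (hvtop : ∀ i Ψ, v i Ψ ≠ ⊤)
    (i : I) (Ψ X : Finset Ω) (p : Ω → ℝ) (ε : ℝ) (hε : 0 < ε)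
    (hΨ : Ψ ∈ demand b s v i p) (hX : X ∈ demand b s v i (favour b s i Ψ p ε)) : X = Ψ := by
  rw [mem_demand_iff b s v hv0 hvtop] at hΨ hX
  obtain ⟨hΨ1, hΨ2, hΨ3⟩ := hΨ
  obtain ⟨hX1, hX2, hX3⟩ := hX
  by_contra hne
  have h1 := hΨ3 X hX1 hX2
  have h2 := hX3 Ψ hΨ1 hΨ2
  simp only [realUtility_eq_univ] at h1 h2
  have key : ∑ ω, ((if ω ∈ X then chi b s i ω * p ω else 0)
        - (if ω ∈ Ψ then chi b s i ω * p ω else 0))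
      < ∑ ω, ((if ω ∈ X then chi b s i ω * favour b s i Ψ p ε ω else 0)
        - (if ω ∈ Ψ then chi b s i ω * favour b s i Ψ p ε ω else 0)) := by
    have aux : ∀ ω, b ω = i ∨ s ω = i → ¬ (ω ∈ X ↔ ω ∈ Ψ) →
        ((if ω ∈ X then chi b s i ω * p ω else 0)
        - (if ω ∈ Ψ then chi b s i ω * p ω else 0))
      < ((if ω ∈ X then chi b s i ω * favour b s i Ψ p ε ω else 0)
        - (if ω ∈ Ψ then chi b s i ω * favour b s i Ψ p ε ω else 0)) := by
      intro ω hω hn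
      have h₁ := hbs ω
      have h₂ := (hbs ω).symm
      rcases hω with rfl | rfl <;> by_cases hωX : ω ∈ X <;> by_cases hωΨ : ω ∈ Ψ <;>
        simp [favour, Holds, chi, hωX, hωΨ, h₁, h₂] at hn ⊢ <;> linarith
    have hmem : ∀ ω, ω ∈ X ∨ ω ∈ Ψ → b ω = i ∨ s ω = i := by
      rintro ω (h | h)
      · simpa [tradesOf] using hX1 h
      · simpa [tradesOf] using hΨ1 h
    apply Finset.sum_lt_sum
    · intro ω _
      by_cases hω : ω ∈ X ↔ ω ∈ Ψ
      · simp [hω]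
      · exact (aux ω (hmem ω (by tauto)) hω).le
    · by_contra! hcon
      apply hne
      ext ω
      by_contra hω
      exact absurd (aux ω (hmem ω (by tauto)) hω) (not_lt.2 (hcon ω (mem_univ _)))
  simp only [Finset.sum_sub_distrib] at key
  linarith

lemma exists_small_perturbation (b s : Ω → I) (v : I → Finset Ω → EReal)
    (hv0 : ∀ i, v i ∅ = 0) (hvtop : ∀ i Ψ, v i Ψ ≠ ⊤) (i : I) (Ψ : Finset Ω) (p : Ω → ℝ) :
    ∃ ε : ℝ, 0 < ε ∧ demand b s v i (favour b s i Ψ p ε) ⊆ demand b s v i p := by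
  have hev : ∀ X : Finset Ω, ∀ᶠ ε in nhdsWithin (0 : ℝ) (Set.Ioi 0),
      X ∈ demand b s v i (favour b s i Ψ p ε) → X ∈ demand b s v i p := by
    intro X
    by_cases hX : X ∈ demand b s v i p
    · exact Filter.Eventually.of_forall fun _ _ => hX
    by_cases hF : X ⊆ tradesOf b s i ∧ v i X ≠ ⊥
    · have : ∃ Y ⊆ tradesOf b s i, v i Y ≠ ⊥ ∧
          realUtility b s v i X p < realUtility b s v i Y p := by
        rw [mem_demand_iff b s v hv0 hvtop] at hX
        by_contra! hcon
        exact hX ⟨hF.1, hF.2, hcon⟩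
      obtain ⟨Y, hY1, hY2, hY3⟩ := this
      have hc : Continuous fun ε : ℝ => favour b s i Ψ p ε := by
        unfold favour
        fun_prop
      have h0 : favour b s i Ψ p 0 = p := by
        ext ω
        simp [favour]
      have hlt : ∀ᶠ ε in nhds (0 : ℝ), realUtility b s v i X (favour b s i Ψ p ε)
          < realUtility b s v i Y (favour b s i Ψ p ε) := by
        apply ((continuous_realUtility b s v i X).comp hc).continuousAt.eventually_lt
          ((continuous_realUtility b s v i Y).comp hc).continuousAt
        simpa [h0] using hY3
      filter_upwards [hlt.filter_mono nhdsWithin_le_nhds] with ε hε hXε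
      rw [mem_demand_iff b s v hv0 hvtop] at hXε
      exact absurd (hXε.2.2 Y hY1 hY2) (not_le.2 hε)
    · refine Filter.Eventually.of_forall fun ε hXε => ?_
      rw [mem_demand_iff b s v hv0 hvtop] at hXε
      exact absurd ⟨hXε.1, hXε.2.1⟩ hF
  obtain ⟨ε, h1, h2⟩ := ((Filter.eventually_all.2 hev).and self_mem_nhdsWithin).exists
  exact ⟨ε, h2, fun X hX => h1 X hX⟩

/-- Gross substitutes: when prices rise, an agent can keep holding every item whose price is
unchanged. -/
lemma exists_demand_of_le (b s : Ω → I) (v : I → Finset Ω → EReal)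
    (hbs : ∀ ω, b ω ≠ s ω) (hv0 : ∀ i, v i ∅ = 0) (hvtop : ∀ i Ψ, v i Ψ ≠ ⊤)
    (i : I) (hFS : FullySubstitutable b s v i) (p p' : Ω → ℝ) (hp : ∀ ω, p ω ≤ p' ω)
    (Ψ : Finset Ω) (hΨ : Ψ ∈ demand b s v i p) :
    ∃ Ψ' ∈ demand b s v i p', ∀ ω, Holds b s i Ψ ω → p ω = p' ω → Holds b s i Ψ' ω := by
  set p₁ : Ω → ℝ := fun ω => if s ω = i then p' ω else p ω with hp₁
  -- First only the prices of the trades sold by `i` rise, which is clause (ii).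
  obtain ⟨Ψ₁, hΨ₁, h1, h2⟩ := hFS.2 p p₁
    (fun ω hω => by have := hbs ω; simp [hp₁, ← hω, this.symm])
    (fun ω hω => by simp [hp₁, hω, hp ω]) Ψ hΨ
  -- Then the remaining prices rise. Clause (i) is applied in the opposite direction, to perturbed
  -- prices at which `Ψ₁` is the only bundle demanded.
  obtain ⟨ε, hε, hsub⟩ := exists_small_perturbation b s v hv0 hvtop i Ψ₁ p'
  obtain ⟨Ψ', hΨ'⟩ := demand_nonempty b s v i (favour b s i Ψ₁ p' ε)
  obtain ⟨Ψ₂, hΨ₂, h3, h4⟩ := hFS.1 (favour b s i Ψ₁ p' ε) (favour b s i Ψ₁ p₁ ε)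
    (fun ω hω => by simp [favour, hp₁, hω])
    (fun ω hω => by
      have := hbs ω
      simp [favour, hp₁, ← hω, this.symm, hp ω]) Ψ' hΨ'
  have heq := eq_of_mem_demand_favour b s v hbs hv0 hvtop i Ψ₁ Ψ₂ p₁ ε hε hΨ₁ hΨ₂
  subst heq
  refine ⟨Ψ', hsub hΨ', fun ω hω hpω => ?_⟩
  rcases hω with ⟨hb, hm⟩ | ⟨hs, hm⟩
  · refine Or.inl ⟨hb, h3 ω (h2 ω hm hb) hb ?_⟩
    simp [favour, hp₁, hpω]
  · refine Or.inr ⟨hs, fun h => hm (h1 ω (h4 ω h hs) hs ?_)⟩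
    simp [hp₁, hs, hpω]

/-! ### The ascending auction -/

/-- The grid level faced by agent `i` at item `ω`, when items have levels `k` and tentative holders
`h`: one step above `k ω` (capped at `N`) for everybody but the holder. -/
def level (N : ℕ) (k : Ω → ℕ) (h : Ω → I) (i : I) (ω : Ω) : ℕ :=
  if h ω = i then k ω else min (k ω + 1) N

/-- The outcome of the ascending auction on the grid `-P + ε * k`, `0 ≤ k ≤ N`, started from any
state in which all agents demand the items they tentatively hold above the lowest level. The
induction is on the number of remaining price steps. -/
lemma auction (b s : Ω → I) (v : I → Finset Ω → EReal)
    (hbs : ∀ ω, b ω ≠ s ω) (hv0 : ∀ i, v i ∅ = 0) (hvtop : ∀ i Ψ, v i Ψ ≠ ⊤)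
    (hFS : ∀ i, FullySubstitutable b s v i) (P ε : ℝ) (hε : 0 < ε) (N : ℕ) (m : ℕ) :
    ∀ (k : Ω → ℕ) (h : Ω → I) (Ψ : I → Finset Ω), ∑ ω, (N - k ω) = m →
      (∀ ω, k ω ≤ N) → (∀ ω, h ω = b ω ∨ h ω = s ω) →
      (∀ i, Ψ i ∈ demand b s v i (fun ω => -P + ε * level N k h i ω)) →
      (∀ ω, 0 < k ω → Holds b s (h ω) (Ψ (h ω)) ω) →
    ∃ (k : Ω → ℕ) (h : Ω → I) (Ψ : I → Finset Ω), (∀ ω, k ω ≤ N) ∧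
      (∀ i, Ψ i ∈ demand b s v i (fun ω => -P + ε * level N k h i ω)) ∧
      (∀ ω, k ω < N → ¬ (Holds b s (b ω) (Ψ (b ω)) ω ∧ Holds b s (s ω) (Ψ (s ω)) ω)) ∧
      (∀ ω, 0 < k ω → Holds b s (b ω) (Ψ (b ω)) ω ∨ Holds b s (s ω) (Ψ (s ω)) ω) := by
  induction m using Nat.strong_induction_on with
  | _ m ih =>
  intro k h Ψ hm hk hh hΨ hold
  by_cases hterm : ∀ ω i, Holds b s i (Ψ i) ω → h ω = i ∨ k ω = N
  · refine ⟨k, h, Ψ, hk, hΨ, ?_, ?_⟩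
    · rintro ω hω ⟨h1, h2⟩
      have e1 := (hterm ω _ h1).resolve_right hω.ne
      have e2 := (hterm ω _ h2).resolve_right hω.ne
      exact hbs ω (e1.symm.trans e2)
    · intro ω hω
      have := hold ω hω
      rcases hh ω with e | e <;> rw [e] at this <;> tauto
  push Not at hterm
  obtain ⟨ω₀, i, hi, hne, hlt⟩ := hterm
  have hlt : k ω₀ < N := lt_of_le_of_ne (hk ω₀) hlt
  set k' := Function.update k ω₀ (k ω₀ + 1) with hk'
  set h' := Function.update h ω₀ i with hh'
  have hlev_i : level N k' h' i = level N k h i := by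
    ext ω
    by_cases hω : ω = ω₀
    · subst hω
      simp [level, k', h', hne]
      omega
    · simp [level, k', h', hω]
  have hlev : ∀ j ω, level N k h j ω ≤ level N k' h' j ω := by
    intro j ω
    by_cases hω : ω = ω₀
    · subst hω
      simp only [level, k', h', Function.update_self]
      split_ifs <;> omega
    · simp [level, k', h', hω]
  have hlev_ne : ∀ j ω, ω ≠ ω₀ → level N k h j ω = level N k' h' j ω := by
    intro j ω hω
    simp [level, k', h', hω]
  have hnew : ∀ j, ∃ X ∈ demand b s v j (fun ω => -P + ε * level N k' h' j ω),
      (j = i → X = Ψ i) ∧ ∀ ω, ω ≠ ω₀ → Holds b s j (Ψ j) ω → Holds b s j X ω := by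
    intro j
    by_cases hj : j = i
    · subst hj
      refine ⟨Ψ j, ?_, fun _ => rfl, fun _ _ h => h⟩
      rw [hlev_i]
      exact hΨ j
    · obtain ⟨X, hX, hX'⟩ := exists_demand_of_le b s v hbs hv0 hvtop j (hFS j) _
        (fun ω => -P + ε * level N k' h' j ω) (fun ω => by
          have : (level N k h j ω : ℝ) ≤ level N k' h' j ω := by exact_mod_cast hlev j ω
          nlinarith) (Ψ j) (hΨ j)
      exact ⟨X, hX, fun h => absurd h hj, fun ω hω hH => hX' ω hH (by simp only [hlev_ne j ω hω])⟩
  choose Ψ' hΨ' hΨ'i hΨ'h using hnew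
  refine ih (∑ ω, (N - k' ω)) ?_ k' h' Ψ' rfl ?_ ?_ hΨ' ?_
  · rw [← hm]
    apply Finset.sum_lt_sum
    · intro ω _
      by_cases hω : ω = ω₀
      · subst hω
        simp [k']
        omega
      · simp [k', hω]
    · exact ⟨ω₀, mem_univ _, by simp [k']; omega⟩
  · intro ω
    by_cases hω : ω = ω₀
    · subst hω
      simp [k']
      omega
    · simpa [k', hω] using hk ω
  · intro ω
    by_cases hω : ω = ω₀
    · subst hω
      simp only [h', Function.update_self]
      rcases hi with hi | hi
      · exact Or.inl hi.1.symm
      · exact Or.inr hi.1.symm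
    · simpa [h', hω] using hh ω
  · intro ω hω0
    by_cases hω : ω = ω₀
    · subst hω
      simp only [h', Function.update_self]
      rw [hΨ'i i rfl]
      exact hi
    · simp only [h', k', Function.update_of_ne hω] at hω0 ⊢
      exact hΨ'h _ ω hω (hold ω hω0)

/-! ### Approximate equilibria and the limit -/

lemma sum_chi (b s : Ω → I) (hbs : ∀ ω, b ω ≠ s ω) (Ψ : I → Finset Ω) (p : Ω → ℝ) :
    ∑ i, ∑ ω ∈ Ψ i, chi b s i ω * p ω =
      ∑ ω, p ω * ((if ω ∈ Ψ (b ω) then 1 else 0) - (if ω ∈ Ψ (s ω) then 1 else 0)) := by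
  have : ∀ i, ∑ ω ∈ Ψ i, chi b s i ω * p ω
      = ∑ ω, if ω ∈ Ψ i then chi b s i ω * p ω else 0 := by
    intro i
    simp
  simp only [this]
  rw [Finset.sum_comm]
  refine Finset.sum_congr rfl fun ω _ => ?_
  rw [← Finset.sum_subset (Finset.subset_univ {b ω, s ω}), Finset.sum_pair (hbs ω)]
  · have := hbs ω
    simp only [chi, if_neg this, if_true]
    split_ifs <;> ring
  · intro i _ hi
    simp only [mem_insert, mem_singleton, not_or] at hi
    simp [chi, Ne.symm hi.1, Ne.symm hi.2]

/-- For prices in a fixed cube `[-P, P]^Ω`, there are `δ`-approximate equilibria for all `δ > 0`. -/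
lemma exists_approx_equilibrium (b s : Ω → I) (v : I → Finset Ω → EReal)
    (hbs : ∀ ω, b ω ≠ s ω) (hv0 : ∀ i, v i ∅ = 0) (hvtop : ∀ i Ψ, v i Ψ ≠ ⊤)
    (hFS : ∀ i, FullySubstitutable b s v i) :
    ∃ P : ℝ, ∀ δ : ℝ, 0 < δ → ∃ (p : Ω → ℝ) (Φ : Finset Ω), (∀ ω, p ω ∈ Set.Icc (-P) P) ∧
      ∀ i, v i (Φ ∩ tradesOf b s i) ≠ ⊥ ∧ ∀ X ⊆ tradesOf b s i, v i X ≠ ⊥ →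
        realUtility b s v i X p ≤ realUtility b s v i (Φ ∩ tradesOf b s i) p + δ := by
  set B : ℝ := ∑ i, ∑ X : Finset Ω, |(v i X).toReal| with hB
  have hB0 : 0 ≤ B := Finset.sum_nonneg fun i _ => Finset.sum_nonneg fun X _ => abs_nonneg _
  refine ⟨B + 1, fun δ hδ => ?_⟩
  set P : ℝ := B + 1 with hP
  set C : ℝ := (Fintype.card Ω : ℝ) with hC
  have hC0 : 0 ≤ C := Nat.cast_nonneg _
  set A : ℝ := (Fintype.card I : ℝ) with hA
  have hA0 : 0 ≤ A := Nat.cast_nonneg _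
  -- The grid step `2P / N` is small against both `δ` and `1`.
  obtain ⟨N, hN⟩ := exists_nat_gt (max 0 (max (2 * P * (2 * C) / δ) (2 * P * (A * C))))
  have hN0 : (0 : ℝ) < N := (le_max_left _ _).trans_lt hN
  have hN1 := (le_max_left _ _).trans_lt ((le_max_right _ _).trans_lt hN)
  have hN2 := (le_max_right _ _).trans_lt ((le_max_right _ _).trans_lt hN)
  set ε : ℝ := 2 * P / N with hε
  have hεN : ε * N = 2 * P := by rw [hε]; field_simp
  have hε0 : 0 < ε := by rw [hε]; positivity
  have hε1 : 2 * (C * ε) ≤ δ := by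
    rw [div_lt_iff₀ hδ] at hN1
    have : 2 * (C * ε) * N ≤ δ * N := by nlinarith
    exact le_of_mul_le_mul_right this hN0
  have hε2 : A * (C * ε) < 1 := by
    have : A * (C * ε) * N < 1 * N := by nlinarith
    exact lt_of_mul_lt_mul_right this hN0.le
  choose Ψ₀ hΨ₀ using fun i => demand_nonempty b s v i
    (fun ω => -P + ε * level N (fun _ => 0) s i ω)
  obtain ⟨k, h, Ψ, hk, hΨ, hboth, hnone⟩ := auction b s v hbs hv0 hvtop hFS P ε hε0 N _
    (fun _ => 0) s Ψ₀ rfl (fun _ => Nat.zero_le _) (fun _ => Or.inr rfl) hΨ₀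
    (fun _ h => absurd h (lt_irrefl _))
  set p : Ω → ℝ := fun ω => -P + ε * k ω with hp
  have hpcube : ∀ ω, p ω ∈ Set.Icc (-P) P := by
    intro ω
    have h1 : (k ω : ℝ) ≤ N := by exact_mod_cast hk ω
    have h2 : (0 : ℝ) ≤ k ω := Nat.cast_nonneg _
    constructor <;> simp only [hp] <;> nlinarith
  have hclose : ∀ i ω, |p ω - (-P + ε * level N k h i ω)| ≤ ε := by
    intro i ω
    have h1 : k ω ≤ level N k h i ω := by
      have := hk ω
      unfold level
      split_ifs <;> omega
    have h2 : level N k h i ω ≤ k ω + 1 := by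
      unfold level
      split_ifs <;> omega
    have h1' : (k ω : ℝ) ≤ level N k h i ω := by exact_mod_cast h1
    have h2' : (level N k h i ω : ℝ) ≤ k ω + 1 := by exact_mod_cast h2
    rw [abs_le]
    constructor <;> simp only [hp] <;> nlinarith
  simp only [mem_demand_iff b s v hv0 hvtop] at hΨ
  have happ : ∀ i X, |realUtility b s v i X p
      - realUtility b s v i X (fun ω => -P + ε * level N k h i ω)| ≤ C * ε :=
    fun i X => realUtility_sub_le b s v i X _ _ ε (hclose i)
  set d : Ω → ℝ := fun ω =>
    p ω * ((if ω ∈ Ψ (b ω) then 1 else 0) - (if ω ∈ Ψ (s ω) then 1 else 0)) with hd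
  have htotal : ∑ ω, d ω < P := by
    have hi : ∀ i, ∑ ω ∈ Ψ i, chi b s i ω * p ω
        ≤ ∑ X : Finset Ω, |(v i X).toReal| + C * ε := by
      intro i
      have h1 := (hΨ i).2.2 ∅ (empty_subset _) (by simp [hv0])
      have h2 := abs_le.1 (happ i (Ψ i))
      have h3 : |(v i (Ψ i)).toReal| ≤ ∑ X : Finset Ω, |(v i X).toReal| :=
        Finset.single_le_sum (f := fun X => |(v i X).toReal|) (fun _ _ => abs_nonneg _)
          (mem_univ (Ψ i))
      have h4 := le_abs_self (v i (Ψ i)).toReal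
      have h5 : realUtility b s v i ∅ (fun ω => -P + ε * level N k h i ω) = 0 := by
        simp [realUtility, hv0]
      have h6 : realUtility b s v i (Ψ i) p
        = (v i (Ψ i)).toReal - ∑ ω ∈ Ψ i, chi b s i ω * p ω := rfl
      linarith [h2.1]
    have := Finset.sum_le_sum fun i (_ : i ∈ univ) => hi i
    rw [sum_chi b s hbs Ψ p, Finset.sum_add_distrib] at this
    simp only [sum_const, card_univ, nsmul_eq_mul] at this
    linarith
  -- An item demanded by both parties has price `P`, an item demanded by neither has price `-P`.
  have hhb : ∀ ω, Holds b s (b ω) (Ψ (b ω)) ω ↔ ω ∈ Ψ (b ω) := by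
    intro ω
    simp [Holds, (hbs ω).symm]
  have hhs : ∀ ω, Holds b s (s ω) (Ψ (s ω)) ω ↔ ω ∉ Ψ (s ω) := by
    intro ω
    simp [Holds, hbs ω]
  simp only [hhb, hhs] at hboth hnone
  have hP0 : 0 < P := by linarith
  have hdisc : ∀ ω, ¬ (ω ∈ Ψ (b ω) ↔ ω ∈ Ψ (s ω)) → d ω = P := by
    intro ω hω
    by_cases h1 : ω ∈ Ψ (b ω)
    · have h2 : ω ∉ Ψ (s ω) := by tauto
      have h3 : k ω = N := by
        by_contra hkn
        exact hboth ω (lt_of_le_of_ne (hk ω) hkn) ⟨h1, h2⟩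
      simp [hd, hp, h1, h2, h3, hεN]
      ring
    · have h2 : ω ∈ Ψ (s ω) := by tauto
      have h3 : k ω = 0 := by
        by_contra hkn
        rcases hnone ω (Nat.pos_of_ne_zero hkn) with h | h <;> tauto
      simp [hd, hp, h1, h2, h3]
  have hagree : ∀ ω, ω ∈ Ψ (b ω) ↔ ω ∈ Ψ (s ω) := by
    intro ω
    by_contra hω
    have : d ω ≤ ∑ ω, d ω := by
      refine Finset.single_le_sum (f := d) (fun ω' _ => ?_) (mem_univ ω)
      by_cases h' : ω' ∈ Ψ (b ω') ↔ ω' ∈ Ψ (s ω')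
      · simp [hd, h']
      · rw [hdisc ω' h']
        exact hP0.le
    rw [hdisc ω hω] at this
    linarith
  refine ⟨p, univ.filter fun ω => ω ∈ Ψ (b ω), hpcube, fun i => ?_⟩
  have hΦ : (univ.filter fun ω => ω ∈ Ψ (b ω)) ∩ tradesOf b s i = Ψ i := by
    ext ω
    simp only [mem_inter, mem_filter, mem_univ, true_and]
    constructor
    · rintro ⟨h1, h2⟩
      rcases (by simpa [tradesOf] using h2 : b ω = i ∨ s ω = i) with rfl | rfl
      · exact h1
      · exact (hagree ω).1 h1
    · intro h1
      have h2 := (hΨ i).1 h1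
      refine ⟨?_, h2⟩
      rcases (by simpa [tradesOf] using h2 : b ω = i ∨ s ω = i) with rfl | rfl
      · exact h1
      · exact (hagree ω).2 h1
  rw [hΦ]
  refine ⟨(hΨ i).2.1, fun X hX hXb => ?_⟩
  have h1 := (hΨ i).2.2 X hX hXb
  have h2 := abs_le.1 (happ i (Ψ i))
  have h3 := abs_le.1 (happ i X)
  linarith [h2.1, h3.2]

/-- Every trading network market with fully substitutable valuations
admits a competitive equilibrium. -/
theorem exists_competitive_equilibrium
    (b s : Ω → I) (v : I → Finset Ω → EReal)
    (hbs : ∀ ω, b ω ≠ s ω) (hv0 : ∀ i, v i ∅ = 0) (hvtop : ∀ i Ψ, v i Ψ ≠ ⊤)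
    (hFS : ∀ i, FullySubstitutable b s v i) :
    ∃ (p : Ω → ℝ) (Φ : Finset Ω), IsCompetitiveEquilibrium b s v p Φ := by
  obtain ⟨P, hP⟩ := exists_approx_equilibrium b s v hbs hv0 hvtop hFS
  choose p Φ hcube happ using fun n : ℕ => hP (1 / ((n : ℝ) + 1)) Nat.one_div_pos_of_nat
  obtain ⟨Φ₀, hΦ₀⟩ := Finite.exists_infinite_fiber Φ
  have hfreq : ∃ᶠ n in Filter.atTop, Φ n = Φ₀ :=
    Nat.frequently_atTop_iff_infinite.2 (Set.infinite_coe_iff.1 hΦ₀)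
  obtain ⟨φ, hφ, hφΦ⟩ := Filter.extraction_of_frequently_atTop hfreq
  have hK : IsCompact (Set.univ.pi fun _ : Ω => Set.Icc (-P) P) :=
    isCompact_univ_pi fun _ => isCompact_Icc
  obtain ⟨q, -, ψ, hψ, hq⟩ := hK.tendsto_subseq (x := fun n => p (φ n))
    (fun n ω _ => hcube (φ n) ω)
  refine ⟨q, Φ₀, fun i => (mem_demand_iff b s v hv0 hvtop i _ q).2
    ⟨inter_subset_right, ?_, fun X hX hXb => ?_⟩⟩
  · have := (happ (φ 0) i).1
    rwa [hφΦ 0] at this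
  · have hδ : Filter.Tendsto (fun n => 1 / (((φ (ψ n) : ℕ) : ℝ) + 1)) Filter.atTop (nhds 0) :=
      (tendsto_one_div_add_atTop_nhds_zero_nat (𝕜 := ℝ)).comp
        (hφ.tendsto_atTop.comp hψ.tendsto_atTop)
    have h1 := ((continuous_realUtility b s v i X).tendsto q).comp hq
    have h2 := (((continuous_realUtility b s v i (Φ₀ ∩ tradesOf b s i)).tendsto q).comp hq).add hδ
    rw [add_zero] at h2
    refine le_of_tendsto_of_tendsto' h1 h2 fun n => ?_
    have := (happ (φ (ψ n)) i).2 X hX hXb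
    rwa [hφΦ (ψ n)] at this
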